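/- (Lemma 1.) Let (ξ_n)_{n≥1} be i.i.d. real random variables with E[ξ_1] > 0 and E[ξ_1²] < ∞, let μ > 0, h ∈ [0,∞), and w ≥ 0, and let (W_n)_{n≥0} be the DE-CuSum sequence started at w. Define the last exit time ν_W = sup{n ≥ 1 : W_n ≤ w} (with sup ∅ = 0) and ν_R = sup{n ≥ 1 : S_n ≤ 0} (with sup ∅ = 0). Then, with q = ℙ(S_n ≥ 0 for all n ≥ 1), E[ν_W] ≤ E[ν_R] + ⌈h/μ⌉/q < ∞; in particular ν_W is finite almost surely and its expectation is bounded by a finite constant that does not depend on any detection threshold. -/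

import Mathlib

open MeasureTheory Filter Set ProbabilityTheory
open scoped ENNReal

/-- DE-CuSum sequence with parameters `μ > 0` and `h ∈ [0,∞)`, started at `w`:
`W_{n+1} = min (W_n + μ) 0` if `W_n < 0`, and `W_{n+1} = max (W_n + ξ_{n+1}) (-h)` if `W_n ≥ 0`. -/
noncomputable def deCusum (ξ : ℕ → ℝ) (μ h w : ℝ) : ℕ → ℝ
  | 0 => w
  | n + 1 =>
    if deCusum ξ μ h w n < 0 then min (deCusum ξ μ h w n + μ) 0
    else max (deCusum ξ μ h w n + ξ n) (-h)
/-- Partial sum `S_n = ξ_1 + ⋯ + ξ_n` (with the increments indexed from `0`), `S_0 = 0`. -/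
def psum (ξ : ℕ → ℝ) (n : ℕ) : ℝ := ∑ k ∈ Finset.range n, ξ k
/-- Last time `n ≥ 1` at which `P n` holds, valued in `ℕ∞` with `sup ∅ = 0`. -/
noncomputable def lastTime (P : ℕ → Prop) : ℕ∞ :=
  sSup ((↑) '' {n : ℕ | 1 ≤ n ∧ P n})


/-! ### Part 1: the maximum of a random walk with negative drift -/

/-- `runMax n y = max_{k ≤ n} (y_0 + ⋯ + y_{k-1})`, computed from the left. -/
noncomputable def runMax : ℕ → (ℕ → ℝ) → ℝ
  | 0, _ => 0
  | n + 1, y => max 0 (y 0 + runMax n (fun k => y (k + 1)))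

lemma runMax_nonneg (n : ℕ) (y : ℕ → ℝ) : 0 ≤ runMax n y := by
  cases n <;> simp [runMax]

lemma runMax_le_succ (n : ℕ) : ∀ y : ℕ → ℝ, runMax n y ≤ runMax (n + 1) y := by
  induction n with
  | zero => intro y; simp [runMax]
  | succ n ih =>
    intro y
    have := ih (fun k => y (k + 1))
    rw [runMax, runMax]
    gcongr

lemma runMax_mono (y : ℕ → ℝ) : Monotone (fun n => runMax n y) :=
  monotone_nat_of_le_succ (fun n => runMax_le_succ n y)

lemma psum_succ_left (y : ℕ → ℝ) (n : ℕ) :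
    psum y (n + 1) = y 0 + psum (fun k => y (k + 1)) n := by
  simp only [psum, Finset.sum_range_succ']
  ring

lemma psum_le_runMax (n : ℕ) : ∀ y : ℕ → ℝ, psum y n ≤ runMax n y := by
  induction n with
  | zero => intro y; simp [psum, runMax]
  | succ n ih =>
    intro y
    have := ih (fun k => y (k + 1))
    rw [psum_succ_left, runMax]
    exact le_max_of_le_right (by linarith)

lemma measurable_runMax (n : ℕ) : Measurable (runMax n) := by
  induction n with
  | zero => exact measurable_const
  | succ n ih =>
    have : Measurable (fun y : ℕ → ℝ => fun k => y (k + 1)) := by fun_prop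
    exact measurable_const.max ((measurable_pi_apply 0).add (ih.comp this))

set_option linter.unusedSectionVars false

section Iid

variable {Ω : Type*} [MeasurableSpace Ω] {P : Measure Ω} [IsProbabilityMeasure P]

lemma law_shift {ξ : ℕ → Ω → ℝ} (hmeas : ∀ n, Measurable (ξ n))
    (hindep : iIndepFun ξ P) (hid : ∀ n, IdentDistrib (ξ n) (ξ 0) P P) (m : ℕ) :
    P.map (fun ω k => ξ (k + m) ω) = Measure.infinitePi (fun _ : ℕ => P.map (ξ 0)) := by
  have h1 := (hindep.precomp (g := fun k => k + m) (add_left_injective m)).map_fun_eq_infinitePi_map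
    (fun i => hmeas _)
  have h2 : (fun i => P.map (ξ (i + m))) = (fun _ : ℕ => P.map (ξ 0)) := by
    ext1 i; exact (hid _).map_eq
  rw [← h2]
  exact h1

lemma ident_shift {ξ : ℕ → Ω → ℝ} (hmeas : ∀ n, Measurable (ξ n))
    (hindep : iIndepFun ξ P) (hid : ∀ n, IdentDistrib (ξ n) (ξ 0) P P) (m : ℕ) :
    IdentDistrib (fun ω k => ξ (k + m) ω) (fun ω k => ξ k ω) P P where
  aemeasurable_fst := (measurable_pi_lambda _ fun _ => hmeas _).aemeasurable
  aemeasurable_snd := (measurable_pi_lambda _ fun _ => hmeas _).aemeasurable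
  map_eq := by
    rw [law_shift hmeas hindep hid m]
    exact (law_shift hmeas hindep hid 0).symm

/-- The past sigma-algebra. -/
@[reducible]
def sigmaPast (ξ : ℕ → Ω → ℝ) (n : ℕ) : MeasurableSpace Ω :=
  ⨆ i ∈ {i : ℕ | i < n}, MeasurableSpace.comap (ξ i) inferInstance

/-- The future sigma-algebra. -/
@[reducible]
def sigmaFut (ξ : ℕ → Ω → ℝ) (n : ℕ) : MeasurableSpace Ω :=
  ⨆ i ∈ {i : ℕ | n ≤ i}, MeasurableSpace.comap (ξ i) inferInstance

lemma indep_past_fut {ξ : ℕ → Ω → ℝ} (hmeas : ∀ n, Measurable (ξ n))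
    (hindep : iIndepFun ξ P) (n : ℕ) : Indep (sigmaPast ξ n) (sigmaFut ξ n) P := by
  refine indep_iSup_of_disjoint (fun i => (hmeas i).comap_le) hindep ?_
  rw [Set.disjoint_left]
  intro i hi hi'
  simp only [mem_ofPred_eq] at hi hi'
  omega

lemma measurable_past (ξ : ℕ → Ω → ℝ) {i n : ℕ} (h : i < n) : Measurable[sigmaPast ξ n] (ξ i) :=
  measurable_iff_comap_le.2
    (le_iSup₂_of_le (f := fun i (_ : i ∈ {i : ℕ | i < n}) =>
      MeasurableSpace.comap (ξ i) inferInstance) i h le_rfl)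

lemma measurable_fut (ξ : ℕ → Ω → ℝ) {i n : ℕ} (h : n ≤ i) : Measurable[sigmaFut ξ n] (ξ i) :=
  measurable_iff_comap_le.2
    (le_iSup₂_of_le (f := fun i (_ : i ∈ {i : ℕ | n ≤ i}) =>
      MeasurableSpace.comap (ξ i) inferInstance) i h le_rfl)

lemma measurable_fut_pi (ξ : ℕ → Ω → ℝ) (n : ℕ) :
    Measurable[sigmaFut ξ n] (fun ω k => ξ (k + n) ω) :=
  @measurable_pi_lambda _ _ _ (sigmaFut ξ n) _ _ fun _ => measurable_fut ξ (Nat.le_add_left _ _)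

lemma sigmaPast_le {ξ : ℕ → Ω → ℝ} (hmeas : ∀ n, Measurable (ξ n)) (n : ℕ) :
    sigmaPast ξ n ≤ ‹MeasurableSpace Ω› :=
  iSup₂_le fun i _ => (hmeas i).comap_le

lemma indep_zero_shift {ξ : ℕ → Ω → ℝ} (hmeas : ∀ n, Measurable (ξ n))
    (hindep : iIndepFun ξ P) : IndepFun (ξ 0) (fun ω k => ξ (k + 1) ω) P := by
  have h := indep_past_fut hmeas hindep 1
  rw [IndepFun_iff_Indep]
  refine indep_of_indep_of_le_left (indep_of_indep_of_le_right h ?_) ?_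
  · exact measurable_iff_comap_le.1 (measurable_fut_pi ξ 1)
  · exact measurable_iff_comap_le.1 (measurable_past ξ one_pos)

lemma runMax_memLp {Y : ℕ → Ω → ℝ} (hmeas : ∀ n, Measurable (Y n))
    (hindep : iIndepFun Y P) (hid : ∀ n, IdentDistrib (Y n) (Y 0) P P)
    (hL : MemLp (Y 0) 2 P) (n : ℕ) : MemLp (fun ω => runMax n (fun k => Y k ω)) 2 P := by
  induction n with
  | zero => simp [runMax]
  | succ n ih =>
    have h1 : IdentDistrib (fun ω => runMax n (fun k => Y (k + 1) ω))
      (fun ω => runMax n (fun k => Y k ω)) P P :=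
      (ident_shift hmeas hindep hid 1).comp (measurable_runMax n)
    have h2 := h1.symm.memLp_snd ih
    have h3 : MemLp (fun _ : Ω => (0 : ℝ)) 2 P := by simp
    exact h3.sup (hL.add h2)

lemma runMax_integral_le {Y : ℕ → Ω → ℝ} (hmeas : ∀ n, Measurable (Y n))
    (hindep : iIndepFun Y P) (hid : ∀ n, IdentDistrib (Y n) (Y 0) P P)
    (hL : MemLp (Y 0) 2 P) (hneg : ∫ ω, Y 0 ω ∂P < 0) (n : ℕ) :
    ∫ ω, runMax n (fun k => Y k ω) ∂P ≤ (∫ ω, Y 0 ω ^ 2 ∂P) / (-(2 * ∫ ω, Y 0 ω ∂P)) := by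
  have hZ := runMax_memLp hmeas hindep hid hL n
  have hZ1 := runMax_memLp hmeas hindep hid hL (n + 1)
  have h1 : IdentDistrib (fun ω => runMax n (fun k => Y (k + 1) ω))
      (fun ω => runMax n (fun k => Y k ω)) P P :=
      (ident_shift hmeas hindep hid 1).comp (measurable_runMax n)
  have hZ' := h1.symm.memLp_snd hZ
  have hi : IndepFun (Y 0) (fun ω => runMax n (fun k => Y (k + 1) ω)) P :=
    (indep_zero_shift hmeas hindep).comp measurable_id (measurable_runMax n)
  have e1 : ∫ ω, runMax n (fun k => Y k ω) ^ 2 ∂P ≤ ∫ ω, runMax (n+1) (fun k => Y k ω) ^ 2 ∂P := by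
    refine integral_mono hZ.integrable_sq hZ1.integrable_sq fun ω => ?_
    exact pow_le_pow_left₀ (runMax_nonneg _ _) (runMax_le_succ _ _) 2
  have e2 : ∫ ω, runMax (n+1) (fun k => Y k ω) ^ 2 ∂P ≤
      ∫ ω, (Y 0 ω + runMax n (fun k => Y (k + 1) ω)) ^ 2 ∂P := by
    refine integral_mono hZ1.integrable_sq (hL.add hZ').integrable_sq fun ω => ?_
    simp only [runMax]
    rcases max_cases 0 (Y 0 ω + runMax n (fun k => Y (k + 1) ω)) with h | h
    · rw [h.1, zero_pow two_ne_zero]; exact sq_nonneg _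
    · rw [h.1]
  have hmul : Integrable (fun ω => Y 0 ω * runMax n (fun k => Y (k + 1) ω)) P :=
    hL.integrable_mul hZ'
  have e3 : ∫ ω, (Y 0 ω + runMax n (fun k => Y (k + 1) ω)) ^ 2 ∂P =
      ∫ ω, Y 0 ω ^ 2 ∂P + 2 * ((∫ ω, Y 0 ω ∂P) * ∫ ω, runMax n (fun k => Y k ω) ∂P) +
      ∫ ω, runMax n (fun k => Y k ω) ^ 2 ∂P := by
    have a1 : ∀ ω, (Y 0 ω + runMax n (fun k => Y (k + 1) ω)) ^ 2 =
      Y 0 ω ^ 2 + 2 * (Y 0 ω * runMax n (fun k => Y (k + 1) ω)) +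
      runMax n (fun k => Y (k + 1) ω) ^ 2 := fun ω => by ring
    simp_rw [a1]
    have a0 : Integrable (fun ω => Y 0 ω ^ 2 + 2 * (Y 0 ω * runMax n (fun k => Y (k + 1) ω))) P :=
      hL.integrable_sq.add (hmul.const_mul 2)
    rw [integral_add a0 hZ'.integrable_sq,
      integral_add hL.integrable_sq (hmul.const_mul 2), integral_const_mul]
    have a2 := hi.integral_fun_mul_eq_mul_integral hL.1 hZ'.1
    rw [a2, h1.integral_eq]
    have a3 := (h1.comp (measurable_id.pow_const 2)).integral_eq
    simp only [Function.comp_def, id] at a3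
    rw [a3]
  rw [le_div_iff₀ (by linarith)]
  nlinarith

lemma runMax_lintegral_lt {Y : ℕ → Ω → ℝ} (hmeas : ∀ n, Measurable (Y n))
    (hindep : iIndepFun Y P) (hid : ∀ n, IdentDistrib (Y n) (Y 0) P P)
    (hL : MemLp (Y 0) 2 P) (hneg : ∫ ω, Y 0 ω ∂P < 0) :
    ∫⁻ ω, ⨆ n, ENNReal.ofReal (runMax n (fun k => Y k ω)) ∂P < ⊤ := by
  have hm : Measurable (fun ω k => Y k ω) := measurable_pi_lambda _ hmeas
  have hm' : ∀ n, Measurable (fun ω => ENNReal.ofReal (runMax n (fun k => Y k ω))) :=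
    fun n => ((measurable_runMax n).comp hm).ennreal_ofReal
  rw [lintegral_iSup hm'
    (fun i j hij ω => ENNReal.ofReal_le_ofReal (runMax_mono _ hij))]
  refine lt_of_le_of_lt (iSup_le fun n => ?_)
    (ENNReal.ofReal_lt_top (r := (∫ ω, Y 0 ω ^ 2 ∂P) / (-(2 * ∫ ω, Y 0 ω ∂P))))
  rw [← ofReal_integral_eq_lintegral_ofReal
    ((runMax_memLp hmeas hindep hid hL n).integrable (by norm_num))
    (Eventually.of_forall fun ω => runMax_nonneg _ _)]
  exact ENNReal.ofReal_le_ofReal (runMax_integral_le hmeas hindep hid hL hneg n)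

/-- The walk with positive drift stays nonnegative with positive probability. -/
lemma stay_nonneg_pos {ξ : ℕ → Ω → ℝ} (hmeas : ∀ n, Measurable (ξ n))
    (hindep : iIndepFun ξ P) (hid : ∀ n, IdentDistrib (ξ n) (ξ 0) P P)
    (hL : MemLp (ξ 0) 2 P) (hmean : 0 < ∫ ω, ξ 0 ω ∂P) :
    P {ω | ∀ n : ℕ, 1 ≤ n → 0 ≤ psum (fun k => ξ k ω) n} ≠ 0 := by
  intro h0
  set Y : ℕ → Ω → ℝ := fun n ω => - ξ n ω with hY
  have hmY : ∀ n, Measurable (Y n) := fun n => (hmeas n).neg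
  have hiY : iIndepFun Y P := hindep.comp (fun _ x => -x) (fun _ => measurable_neg)
  have hidY : ∀ n, IdentDistrib (Y n) (Y 0) P P := fun n => (hid n).comp measurable_neg
  have hLY : MemLp (Y 0) 2 P := hL.neg
  have hm : Measurable (fun ω k => Y k ω) := measurable_pi_lambda _ hmY
  have key : ∀ n, ∫ ω, ξ 0 ω ∂P ≤
      ∫ ω, (if runMax (n + 1) (fun k => Y k ω) = 0 then |ξ 0 ω| else 0) ∂P := by
    intro n
    have h1 : IdentDistrib (fun ω => runMax n (fun k => Y (k + 1) ω))
      (fun ω => runMax n (fun k => Y k ω)) P P :=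
      (ident_shift hmY hiY hidY 1).comp (measurable_runMax n)
    have hZ := (runMax_memLp hmY hiY hidY hLY n).integrable (by norm_num)
    have hZ1 := (runMax_memLp hmY hiY hidY hLY (n + 1)).integrable (by norm_num)
    have hZ' := (h1.symm.memLp_snd (runMax_memLp hmY hiY hidY hLY n)).integrable (by norm_num)
    have hX := hL.integrable (by norm_num)
    have hI : Integrable
        (fun ω => if runMax (n + 1) (fun k => Y k ω) = 0 then |ξ 0 ω| else 0) P := by
      refine hX.abs.mono' ?_ ?_
      · refine (Measurable.ite ?_ (hmeas 0).abs measurable_const).aestronglyMeasurable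
        exact ((measurable_runMax (n+1)).comp hm) (measurableSet_singleton 0)
      · refine Eventually.of_forall fun ω => ?_
        split_ifs <;> simp
    have b1 : ∫ ω, runMax (n + 1) (fun k => Y k ω) ∂P ≤
        ∫ ω, ((if runMax (n + 1) (fun k => Y k ω) = 0 then |ξ 0 ω| else 0) +
          (runMax n (fun k => Y (k + 1) ω) - ξ 0 ω)) ∂P := by
      refine integral_mono hZ1 (hI.add (hZ'.sub hX)) fun ω => ?_
      have c1 := runMax_nonneg n (fun k => Y (k + 1) ω)
      have c2 : runMax (n + 1) (fun k => Y k ω) =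
        max 0 (- ξ 0 ω + runMax n (fun k => Y (k + 1) ω)) := rfl
      simp only
      split_ifs with hc
      · rw [hc]
        have := le_abs_self (ξ 0 ω)
        linarith
      · rcases max_cases 0 (- ξ 0 ω + runMax n (fun k => Y (k + 1) ω)) with h | h
        · exact absurd (c2.trans h.1) hc
        · rw [c2, h.1]; linarith
    have b0 : Integrable (fun ω => runMax n (fun k => Y (k + 1) ω) - ξ 0 ω) P := hZ'.sub hX
    rw [integral_add hI b0, integral_sub hZ' hX, h1.integral_eq] at b1
    have b2 : ∫ ω, runMax n (fun k => Y k ω) ∂P ≤ ∫ ω, runMax (n + 1) (fun k => Y k ω) ∂P :=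
      integral_mono hZ hZ1 fun ω => runMax_le_succ _ _
    linarith
  have hX := hL.integrable (by norm_num)
  have lim : Tendsto (fun n => ∫ ω, (if runMax (n + 1) (fun k => Y k ω) = 0
      then |ξ 0 ω| else 0) ∂P) atTop (nhds (∫ _, (0 : ℝ) ∂P)) := by
    refine tendsto_integral_of_dominated_convergence (fun ω => |ξ 0 ω|) ?_ hX.abs ?_ ?_
    · intro n
      refine (Measurable.ite ?_ (hmeas 0).abs measurable_const).aestronglyMeasurable
      exact ((measurable_runMax (n+1)).comp hm) (measurableSet_singleton 0)
    · intro n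
      refine Eventually.of_forall fun ω => ?_
      split_ifs <;> simp
    · have : ∀ᵐ ω ∂P, ¬ ∀ n : ℕ, 1 ≤ n → 0 ≤ psum (fun k => ξ k ω) n := by
        rw [ae_iff]; simpa using h0
      filter_upwards [this] with ω hω
      push Not at hω
      obtain ⟨n, _, hn⟩ := hω
      refine tendsto_const_nhds.congr' ?_
      filter_upwards [eventually_ge_atTop n] with m hm'
      have d1 := psum_le_runMax n (fun k => Y k ω)
      have d2 := runMax_mono (fun k => Y k ω) (show n ≤ m + 1 by omega)
      have d3 : psum (fun k => Y k ω) n = - psum (fun k => ξ k ω) n := by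
        simp [psum, hY]
      simp only at d2
      rw [if_neg]
      intro h
      linarith
  have := ge_of_tendsto' lim key
  simp at this
  linarith

end Iid

/-! ### Part 2: deterministic facts -/

lemma le_lastTime {p : ℕ → Prop} {n : ℕ} (h1 : 1 ≤ n) (hp : p n) :
    (n : ℝ≥0∞) ≤ (lastTime p : ℝ≥0∞) := by
  have : (n : ℕ∞) ≤ lastTime p := le_sSup ⟨n, ⟨h1, hp⟩, rfl⟩
  have := ENat.toENNReal_le.2 this
  simpa using this

lemma lastTime_le {p : ℕ → Prop} {B : ℝ≥0∞} (h : ∀ n : ℕ, 1 ≤ n → p n → (n : ℝ≥0∞) ≤ B) :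
    (lastTime p : ℝ≥0∞) ≤ B := by
  rcases eq_or_ne B ⊤ with hB | hB
  · rw [hB]; exact le_top
  have h1 : lastTime p ≤ (⌊B.toReal⌋₊ : ℕ∞) := by
    refine sSup_le ?_
    rintro _ ⟨n, ⟨hn, hp⟩, rfl⟩
    have := ENNReal.toReal_mono hB (h n hn hp)
    rw [ENNReal.toReal_natCast] at this
    exact Nat.cast_le.2 (Nat.le_floor this)
  have h2 := ENat.toENNReal_le.2 h1
  refine h2.trans ?_
  rw [ENat.toENNReal_coe, ← ENNReal.ofReal_toReal hB, ← ENNReal.ofReal_natCast]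
  exact ENNReal.ofReal_le_ofReal (by simpa using Nat.floor_le ENNReal.toReal_nonneg)

open Classical in
lemma lastTime_eq (p : ℕ → Prop) :
    (lastTime p : ℝ≥0∞) = ⨆ n : ℕ, if 1 ≤ n ∧ p n then (n : ℝ≥0∞) else 0 := by
  refine le_antisymm (lastTime_le fun n h1 hp => ?_) (iSup_le fun n => ?_)
  · refine le_iSup_of_le n ?_
    rw [if_pos ⟨h1, hp⟩]
  · split_ifs with h
    · exact le_lastTime h.1 h.2
    · exact zero_le

section Det

variable {x : ℕ → ℝ} {μ h w : ℝ}

lemma deCusum_neg {n : ℕ} (hn : deCusum x μ h w n < 0) :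
    deCusum x μ h w (n + 1) = min (deCusum x μ h w n + μ) 0 := by
  rw [deCusum, if_pos hn]

lemma deCusum_nonneg {n : ℕ} (hn : 0 ≤ deCusum x μ h w n) :
    deCusum x μ h w (n + 1) = max (deCusum x μ h w n + x n) (-h) := by
  rw [deCusum, if_neg (not_lt.2 hn)]

lemma deCusum_ge (hμ : 0 < μ) (hh : 0 ≤ h) (hw : 0 ≤ w) (n : ℕ) :
    -h ≤ deCusum x μ h w n := by
  induction n with
  | zero => simp only [deCusum]; linarith
  | succ n ih =>
    rcases lt_or_ge (deCusum x μ h w n) 0 with hn | hn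
    · rw [deCusum_neg hn]; exact le_min (by linarith) (by linarith)
    · rw [deCusum_nonneg hn]; exact le_max_right _ _

lemma exists_used (hμ : 0 < μ) (n : ℕ) : ∃ m, n ≤ m ∧ 0 ≤ deCusum x μ h w m := by
  obtain ⟨k, hk⟩ := exists_nat_ge (- deCusum x μ h w n / μ)
  rw [div_le_iff₀ hμ] at hk
  induction k generalizing n with
  | zero => exact ⟨n, le_rfl, by simp at hk; linarith⟩
  | succ k ih =>
    rcases lt_or_ge (deCusum x μ h w n) 0 with hn | hn
    · have : - deCusum x μ h w (n + 1) ≤ k * μ := by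
        rw [deCusum_neg hn]
        push_cast at hk
        have : 0 ≤ k * μ := by positivity
        rcases min_cases (deCusum x μ h w n + μ) 0 with h | h <;> rw [h.1] <;> linarith
      obtain ⟨m, hm, hm'⟩ := ih (n + 1) this
      exact ⟨m, by omega, hm'⟩
    · exact ⟨n, le_rfl, hn⟩

/-- The number of used increments before time `n`. -/
noncomputable def usedCount (x : ℕ → ℝ) (μ h w : ℝ) (n : ℕ) : ℕ :=
  Nat.count (fun m => 0 ≤ deCusum x μ h w m) n

/-- The sequence of used increments. -/
noncomputable def usedSeq (x : ℕ → ℝ) (μ h w : ℝ) (j : ℕ) : ℝ :=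
  x (Nat.nth (fun m => 0 ≤ deCusum x μ h w m) j)

lemma usedSeq_usedCount {n : ℕ} (hn : 0 ≤ deCusum x μ h w n) :
    usedSeq x μ h w (usedCount x μ h w n) = x n := by
  rw [usedSeq, usedCount, Nat.nth_count (p := fun m => 0 ≤ deCusum x μ h w m) hn]

lemma usedCount_succ_pos {n : ℕ} (hn : 0 ≤ deCusum x μ h w n) :
    usedCount x μ h w (n + 1) = usedCount x μ h w n + 1 := by
  rw [usedCount, Nat.count_succ, if_pos hn, usedCount]

lemma usedCount_succ_neg {n : ℕ} (hn : deCusum x μ h w n < 0) :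
    usedCount x μ h w (n + 1) = usedCount x μ h w n := by
  rw [usedCount, Nat.count_succ, if_neg (not_le.2 hn), usedCount, add_zero]

lemma deCusum_ge_psum (hμ : 0 < μ) (n : ℕ) :
    w + psum (usedSeq x μ h w) (usedCount x μ h w n) ≤ deCusum x μ h w n := by
  induction n with
  | zero => simp [psum, deCusum, usedCount]
  | succ n ih =>
    rcases lt_or_ge (deCusum x μ h w n) 0 with hn | hn
    · rw [usedCount_succ_neg hn, deCusum_neg hn]
      exact le_min (by linarith) (by linarith)
    · rw [usedCount_succ_pos hn, deCusum_nonneg hn, psum, Finset.sum_range_succ,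
        usedSeq_usedCount hn]
      rw [psum] at ih
      exact le_max_of_le_left (by linarith)

/-- The return event at time `m`. -/
def isRet (x : ℕ → ℝ) (μ h w : ℝ) (m : ℕ) : Prop :=
  deCusum x μ h w m < 0 ∧ 0 ≤ deCusum x μ h w (m + 1)

open Classical in
lemma skipped_le (hμ : 0 < μ) (hh : 0 ≤ h) (hw : 0 ≤ w) (n : ℕ) :
    n + ⌈- deCusum x μ h w n / μ⌉₊ ≤ usedCount x μ h w n + ⌈h / μ⌉₊ *
      (Nat.count (isRet x μ h w) n + if deCusum x μ h w n < 0 then 1 else 0) := by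
  induction n with
  | zero =>
    have : ⌈- w / μ⌉₊ = 0 := by
      rw [Nat.ceil_eq_zero]
      exact div_nonpos_of_nonpos_of_nonneg (by linarith) hμ.le
    simp [deCusum, this]
  | succ n ih =>
    have hz : ∀ m, 0 ≤ deCusum x μ h w m → ⌈- deCusum x μ h w m / μ⌉₊ = 0 := by
      intro m hm
      rw [Nat.ceil_eq_zero]
      exact div_nonpos_of_nonpos_of_nonneg (by linarith) hμ.le
    have hdec : deCusum x μ h w n < 0 → ⌈- deCusum x μ h w (n + 1) / μ⌉₊ + 1 ≤
        ⌈- deCusum x μ h w n / μ⌉₊ := by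
      intro hn
      have hp : 0 < ⌈- deCusum x μ h w n / μ⌉₊ := Nat.ceil_pos.2 (div_pos (by linarith) hμ)
      have : ⌈- deCusum x μ h w (n + 1) / μ⌉₊ ≤ ⌈- deCusum x μ h w n / μ⌉₊ - 1 := by
        rw [Nat.ceil_le, Nat.cast_sub hp, div_le_iff₀ hμ]
        have h1 := Nat.le_ceil (- deCusum x μ h w n / μ)
        rw [div_le_iff₀ hμ] at h1
        have h2 : (1 : ℝ) ≤ ⌈- deCusum x μ h w n / μ⌉₊ := by exact_mod_cast hp
        rw [deCusum_neg hn]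
        push_cast
        rcases min_cases (deCusum x μ h w n + μ) 0 with h | h <;> rw [h.1] <;> nlinarith
      omega
    rcases lt_or_ge (deCusum x μ h w n) 0 with hn | hn
    · rw [if_pos hn] at ih
      have := hdec hn
      rw [usedCount_succ_neg hn, Nat.count_succ]
      rcases lt_or_ge (deCusum x μ h w (n + 1)) 0 with hn1 | hn1
      · rw [if_pos hn1, if_neg (fun hc : isRet x μ h w n => not_lt.2 hc.2 hn1), add_zero]
        omega
      · rw [if_neg (not_lt.2 hn1), if_pos (show isRet x μ h w n from ⟨hn, hn1⟩), add_zero]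
        omega
    · rw [if_neg (not_lt.2 hn), hz n hn] at ih
      rw [usedCount_succ_pos hn, Nat.count_succ,
        if_neg (fun hc : isRet x μ h w n => not_lt.2 hn hc.1)]
      rcases lt_or_ge (deCusum x μ h w (n + 1)) 0 with hn1 | hn1
      · rw [if_pos hn1]
        have : ⌈- deCusum x μ h w (n + 1) / μ⌉₊ ≤ ⌈h / μ⌉₊ := by
          refine Nat.ceil_mono ?_
          have := deCusum_ge (x := x) hμ hh hw (n + 1)
          gcongr
          linarith
        simp only [add_zero, mul_add, mul_one] at ih ⊢
        omega
      · rw [if_neg (not_lt.2 hn1), hz _ hn1]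
        simp only [add_zero] at ih ⊢
        omega

lemma skipped_mono {n m : ℕ} (hnm : n ≤ m) :
    n + usedCount x μ h w m ≤ m + usedCount x μ h w n := by
  induction m, hnm using Nat.le_induction with
  | base => exact le_rfl
  | succ m _ ih =>
    rcases lt_or_ge (deCusum x μ h w m) 0 with hn | hn
    · rw [usedCount_succ_neg hn]; omega
    · rw [usedCount_succ_pos hn]; omega

open Classical in
lemma lastTime_deCusum_le (hμ : 0 < μ) (hh : 0 ≤ h) (hw : 0 ≤ w) :
    (lastTime (fun n => deCusum x μ h w n ≤ w) : ℝ≥0∞) ≤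
      (lastTime (fun n => psum (usedSeq x μ h w) n ≤ 0) : ℝ≥0∞) +
      ⌈h / μ⌉₊ * ∑' m, if isRet x μ h w m then (1 : ℝ≥0∞) else 0 := by
  refine lastTime_le fun n _ hp => ?_
  obtain ⟨m, hnm, hm⟩ := exists_used (x := x) (h := h) (w := w) hμ n
  have h1 := skipped_le (x := x) hμ hh hw m
  have h2 := skipped_mono (x := x) (μ := μ) (h := h) (w := w) hnm
  rw [if_neg (not_lt.2 hm), add_zero] at h1
  have h3 : n ≤ usedCount x μ h w n + ⌈h / μ⌉₊ * Nat.count (isRet x μ h w) m := by omega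
  have h4 : (n : ℝ≥0∞) ≤ usedCount x μ h w n +
      ⌈h / μ⌉₊ * (Nat.count (isRet x μ h w) m : ℝ≥0∞) := by exact_mod_cast h3
  refine h4.trans (add_le_add ?_ (mul_le_mul_right ?_ _))
  · rcases Nat.eq_zero_or_pos (usedCount x μ h w n) with h0 | h0
    · simp [h0]
    · refine le_lastTime (p := fun n => psum (usedSeq x μ h w) n ≤ 0) h0 ?_
      have := deCusum_ge_psum (x := x) (h := h) (w := w) hμ n
      linarith
  · refine le_trans (le_of_eq ?_) (ENNReal.sum_le_tsum (Finset.range m))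
    rw [Nat.count_eq_card_filter_range, Finset.card_filter]
    push_cast
    rfl

lemma deCusum_after (hh : 0 ≤ h) {m : ℕ} (h0 : deCusum x μ h w m = 0)
    (hs : ∀ n, 1 ≤ n → 0 ≤ psum (fun k => x (k + m)) n) (i : ℕ) :
    deCusum x μ h w (m + i) = psum (fun k => x (k + m)) i := by
  have hs' : ∀ n, 0 ≤ psum (fun k => x (k + m)) n := by
    intro n
    rcases Nat.eq_zero_or_pos n with hn | hn
    · simp [hn, psum]
    · exact hs n hn
  induction i with
  | zero => simpa [psum] using h0
  | succ i ih =>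
    have h1 := hs' i
    have h2 := hs' (i + 1)
    rw [← add_assoc, deCusum_nonneg (by rw [ih]; exact h1), ih]
    have h3 : psum (fun k => x (k + m)) (i + 1) = psum (fun k => x (k + m)) i + x (m + i) := by
      rw [psum, Finset.sum_range_succ, psum, add_comm m i]
    rw [h3] at h2 ⊢
    exact max_eq_left (by linarith)

end Det

/-! ### Part 3: measurability, optional skipping, number of returns -/

lemma measurable_deCusum {Ω : Type*} [MeasurableSpace Ω] {ξ : ℕ → Ω → ℝ} (μ h w : ℝ) (n : ℕ)
    (hξ : ∀ i < n, Measurable (ξ i)) :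
    Measurable (fun ω => deCusum (fun k => ξ k ω) μ h w n) := by
  induction n with
  | zero => simp only [deCusum]; exact measurable_const
  | succ n ih =>
    have h1 := ih fun i hi => hξ i (by omega)
    have h2 := hξ n (by omega)
    simp only [deCusum]
    refine Measurable.ite (measurableSet_lt h1 measurable_const) ?_ ?_
    · exact (h1.add_const μ).min measurable_const
    · exact (h1.add h2).max measurable_const

lemma measurable_usedCount {Ω : Type*} [MeasurableSpace Ω] {ξ : ℕ → Ω → ℝ} (μ h w : ℝ) (n : ℕ)
    (hξ : ∀ i < n, Measurable (ξ i)) :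
    Measurable (fun ω => usedCount (fun k => ξ k ω) μ h w n) := by
  induction n with
  | zero => simp only [usedCount, Nat.count_zero]; exact measurable_const
  | succ n ih =>
    have h1 := ih fun i hi => hξ i (by omega)
    have h2 := measurable_deCusum μ h w n fun i hi => hξ i (by omega)
    simp only [usedCount, Nat.count_succ] at h1 ⊢
    refine h1.add (Measurable.ite (measurableSet_le measurable_const h2) ?_ ?_) <;>
    exact measurable_const

/-- The `J`-th used time is `n`, and the earlier used increments lie in the prescribed sets. -/
def skipEvent (A : ℕ → Set ℝ) (μ h w : ℝ) (J n : ℕ) (x : ℕ → ℝ) : Prop :=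
  0 ≤ deCusum x μ h w n ∧ usedCount x μ h w n = J ∧
    ∀ m < n, 0 ≤ deCusum x μ h w m → x m ∈ A (usedCount x μ h w m)

lemma measurableSet_skipEvent {Ω : Type*} [MeasurableSpace Ω] {ξ : ℕ → Ω → ℝ} {A : ℕ → Set ℝ}
    (hA : ∀ i, MeasurableSet (A i)) (μ h w : ℝ) (J n : ℕ)
    (hξ : ∀ i < n, Measurable (ξ i)) :
    MeasurableSet {ω | skipEvent A μ h w J n (fun k => ξ k ω)} := by
  have h1 := measurable_deCusum μ h w n hξ
  have h2 := measurable_usedCount μ h w n hξ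
  refine (measurableSet_le measurable_const h1).inter
    ((h2 (measurableSet_singleton J)).inter ?_)
  have : {ω | ∀ m < n, 0 ≤ deCusum (fun k => ξ k ω) μ h w m →
      ξ m ω ∈ A (usedCount (fun k => ξ k ω) μ h w m)} =
      ⋂ m, ⋂ (_ : m < n), ({ω | 0 ≤ deCusum (fun k => ξ k ω) μ h w m}ᶜ ∪
        ⋃ j, ({ω | usedCount (fun k => ξ k ω) μ h w m = j} ∩ {ω | ξ m ω ∈ A j})) := by
    ext ω
    simp [imp_iff_not_or]
  change MeasurableSet {ω | ∀ m < n, 0 ≤ deCusum (fun k => ξ k ω) μ h w m →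
      ξ m ω ∈ A (usedCount (fun k => ξ k ω) μ h w m)}
  rw [this]
  refine MeasurableSet.iInter fun m => MeasurableSet.iInter fun hm => ?_
  have h1 := measurable_deCusum μ h w m fun i hi => hξ i (by omega)
  have h2 := measurable_usedCount μ h w m fun i hi => hξ i (by omega)
  refine (measurableSet_le measurable_const h1).compl.union (MeasurableSet.iUnion fun j => ?_)
  exact (h2 (measurableSet_singleton j)).inter (hξ m hm (hA j))

lemma used_infinite {x : ℕ → ℝ} {μ h w : ℝ} (hμ : 0 < μ) :
    {m | 0 ≤ deCusum x μ h w m}.Infinite := by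
  rw [Set.infinite_iff_exists_gt]
  intro n
  obtain ⟨m, hm, hm'⟩ := exists_used (x := x) (h := h) (w := w) hμ (n + 1)
  exact ⟨m, hm', by omega⟩

lemma skipEvent_iff {x : ℕ → ℝ} {μ h w : ℝ} (hμ : 0 < μ) (A : ℕ → Set ℝ) (J n : ℕ) :
    skipEvent A μ h w J n x ↔ n = Nat.nth (fun m => 0 ≤ deCusum x μ h w m) J ∧
      ∀ i < J, usedSeq x μ h w i ∈ A i := by
  have hinf := used_infinite (x := x) (h := h) (w := w) hμ
  constructor
  · rintro ⟨h1, h2, h3⟩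
    have hn : n = Nat.nth (fun m => 0 ≤ deCusum x μ h w m) J := by
      rw [← h2, usedCount, Nat.nth_count (p := fun m => 0 ≤ deCusum x μ h w m) h1]
    refine ⟨hn, fun i hi => ?_⟩
    have h4 := h3 (Nat.nth (fun m => 0 ≤ deCusum x μ h w m) i)
      (by rw [hn]; exact Nat.nth_strictMono hinf hi) (Nat.nth_mem_of_infinite hinf i)
    rw [usedCount, Nat.count_nth_of_infinite hinf] at h4
    exact h4
  · rintro ⟨rfl, h2⟩
    refine ⟨Nat.nth_mem_of_infinite hinf J, Nat.count_nth_of_infinite hinf J, fun m hm hm' => ?_⟩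
    rw [← usedSeq_usedCount hm']
    refine h2 _ ?_
    have := Nat.count_strict_mono (p := fun m => 0 ≤ deCusum x μ h w m) hm' hm
    rw [Nat.count_nth_of_infinite hinf] at this
    exact this

section Iid

variable {Ω : Type*} [MeasurableSpace Ω] {P : Measure Ω} [IsProbabilityMeasure P]

lemma measurable_usedSeq {ξ : ℕ → Ω → ℝ} (hmeas : ∀ n, Measurable (ξ n)) {μ : ℝ} (h w : ℝ)
    (hμ : 0 < μ) (j : ℕ) : Measurable (fun ω => usedSeq (fun k => ξ k ω) μ h w j) := by
  intro B hB
  have : (fun ω => usedSeq (fun k => ξ k ω) μ h w j) ⁻¹' B =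
      ⋃ n, ({ω | skipEvent (fun _ => univ) μ h w j n (fun k => ξ k ω)} ∩ ξ n ⁻¹' B) := by
    ext ω
    simp [skipEvent_iff hμ, usedSeq]
  rw [this]
  refine MeasurableSet.iUnion fun n => MeasurableSet.inter ?_ (hmeas n hB)
  exact measurableSet_skipEvent (fun _ => MeasurableSet.univ) μ h w j n fun i _ => hmeas i

lemma usedSeq_rect {ξ : ℕ → Ω → ℝ} (hmeas : ∀ n, Measurable (ξ n))
    (hindep : iIndepFun ξ P) (hid : ∀ n, IdentDistrib (ξ n) (ξ 0) P P) {μ : ℝ} (h w : ℝ)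
    (hμ : 0 < μ) {A : ℕ → Set ℝ} (hA : ∀ i, MeasurableSet (A i)) (J : ℕ) :
    P {ω | ∀ i < J, usedSeq (fun k => ξ k ω) μ h w i ∈ A i} =
      ∏ i ∈ Finset.range J, P.map (ξ 0) (A i) := by
  induction J with
  | zero => simp
  | succ J ih =>
    have hE : ∀ n, MeasurableSet {ω | skipEvent A μ h w J n (fun k => ξ k ω)} := fun n =>
      measurableSet_skipEvent hA μ h w J n fun i _ => hmeas i
    have hd : Pairwise (Function.onFun Disjoint
        (fun n => {ω | skipEvent A μ h w J n (fun k => ξ k ω)})) := by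
      intro a b hab
      rw [Function.onFun, Set.disjoint_left]
      intro ω ha hb
      exact hab (((skipEvent_iff hμ _ _ _).1 ha).1.trans ((skipEvent_iff hμ _ _ _).1 hb).1.symm)
    have e1 : {ω | ∀ i < J, usedSeq (fun k => ξ k ω) μ h w i ∈ A i} =
        ⋃ n, {ω | skipEvent A μ h w J n (fun k => ξ k ω)} := by
      ext ω
      simp [skipEvent_iff hμ]
    have e2 : {ω | ∀ i < J + 1, usedSeq (fun k => ξ k ω) μ h w i ∈ A i} =
        ⋃ n, ({ω | skipEvent A μ h w J n (fun k => ξ k ω)} ∩ ξ n ⁻¹' (A J)) := by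
      ext ω
      simp only [Nat.forall_lt_succ_right, mem_iUnion, mem_inter_iff, mem_ofPred_eq,
        skipEvent_iff hμ, mem_preimage]
      constructor
      · rintro ⟨h1, h2⟩
        exact ⟨_, ⟨rfl, h1⟩, h2⟩
      · rintro ⟨n, ⟨rfl, h1⟩, h2⟩
        exact ⟨h1, h2⟩
    rw [e2, measure_iUnion (fun a b hab => ((hd hab).mono inter_subset_left inter_subset_left))
      (fun n => (hE n).inter (hmeas n (hA J))), Finset.prod_range_succ, ← ih, e1,
      measure_iUnion hd hE, ← ENNReal.tsum_mul_right]
    congr 1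
    ext1 n
    have hi := indep_past_fut hmeas hindep n
    rw [(Indep_iff _ _ _).1 hi _ _
      (@measurableSet_skipEvent _ (sigmaPast ξ n) _ _ hA μ h w J n
        fun i hi => measurable_past ξ hi)
      (measurable_fut ξ le_rfl (hA J)), ← (hid n).map_eq, Measure.map_apply (hmeas n) (hA J)]

lemma usedSeq_law {ξ : ℕ → Ω → ℝ} (hmeas : ∀ n, Measurable (ξ n))
    (hindep : iIndepFun ξ P) (hid : ∀ n, IdentDistrib (ξ n) (ξ 0) P P) {μ : ℝ} (h w : ℝ)
    (hμ : 0 < μ) :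
    P.map (fun ω j => usedSeq (fun k => ξ k ω) μ h w j) =
      Measure.infinitePi (fun _ : ℕ => P.map (ξ 0)) := by
  have : IsProbabilityMeasure (P.map (ξ 0)) :=
    Measure.isProbabilityMeasure_map (hmeas 0).aemeasurable
  classical
  refine Measure.eq_infinitePi _ fun s t ht => ?_
  have hm : Measurable (fun ω j => usedSeq (fun k => ξ k ω) μ h w j) :=
    measurable_pi_lambda _ fun j => measurable_usedSeq hmeas h w hμ j
  rw [Measure.map_apply hm (MeasurableSet.pi s.countable_toSet fun i _ => ht i)]
  obtain ⟨J, hJ⟩ : ∃ J, s ⊆ Finset.range J :=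
    ⟨s.sup id + 1, fun i hi => by
      have : i ≤ s.sup id := Finset.le_sup (f := id) hi
      simp; omega⟩
  set A : ℕ → Set ℝ := fun i => if i ∈ s then t i else univ with hAdef
  have hA : ∀ i, MeasurableSet (A i) := by
    intro i
    simp only [hAdef]
    split_ifs
    · exact ht i
    · exact MeasurableSet.univ
  have e := usedSeq_rect hmeas hindep hid h w hμ hA J
  have e1 : (fun ω j => usedSeq (fun k => ξ k ω) μ h w j) ⁻¹' ((s : Set ℕ).pi t) =
      {ω | ∀ i < J, usedSeq (fun k => ξ k ω) μ h w i ∈ A i} := by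
    ext ω
    simp only [mem_preimage, Set.mem_pi, mem_ofPred_eq, Finset.mem_coe]
    constructor
    · intro hs i _
      simp only [hAdef]
      split_ifs with hi
      · exact hs i hi
      · exact mem_univ _
    · intro hs i hi
      have := hs i (Finset.mem_range.1 (hJ hi))
      simpa only [hAdef, if_pos hi] using this
  rw [e1, e]
  rw [← Finset.prod_subset hJ]
  · refine Finset.prod_congr rfl fun i hi => ?_
    simp only [hAdef, if_pos hi]
  · intro i _ hi
    simp only [hAdef, if_neg hi]
    simp

lemma measurable_lastTime_psum :
    Measurable (fun x : ℕ → ℝ => (lastTime (fun n => psum x n ≤ 0) : ℝ≥0∞)) := by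
  classical
  simp_rw [lastTime_eq]
  refine Measurable.iSup fun n => Measurable.ite ?_ measurable_const measurable_const
  have : Measurable (fun x : ℕ → ℝ => psum x n) := by
    unfold psum; fun_prop
  exact (MeasurableSet.const _).inter (measurableSet_le this measurable_const)

lemma lintegral_usedSeq {ξ : ℕ → Ω → ℝ} (hmeas : ∀ n, Measurable (ξ n))
    (hindep : iIndepFun ξ P) (hid : ∀ n, IdentDistrib (ξ n) (ξ 0) P P) {μ : ℝ} (h w : ℝ)
    (hμ : 0 < μ) :
    ∫⁻ ω, (lastTime (fun n => psum (usedSeq (fun k => ξ k ω) μ h w) n ≤ 0) : ℝ≥0∞) ∂P =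
    ∫⁻ ω, (lastTime (fun n => psum (fun k => ξ k ω) n ≤ 0) : ℝ≥0∞) ∂P := by
  have hm : Measurable (fun ω j => usedSeq (fun k => ξ k ω) μ h w j) :=
    measurable_pi_lambda _ fun j => measurable_usedSeq hmeas h w hμ j
  have hm' : Measurable (fun ω k => ξ k ω) := measurable_pi_lambda _ hmeas
  have e1 := lintegral_map (μ := P) measurable_lastTime_psum hm
  have e2 := lintegral_map (μ := P) measurable_lastTime_psum hm'
  rw [usedSeq_law hmeas hindep hid h w hμ] at e1
  have e3 := law_shift hmeas hindep hid 0
  simp only [add_zero] at e3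
  rw [e3] at e2
  exact e1.symm.trans e2

lemma measurableSet_isRet {Ω : Type*} [MeasurableSpace Ω] {ξ : ℕ → Ω → ℝ} (μ h w : ℝ) (m : ℕ)
    (hξ : ∀ i < m + 1, Measurable (ξ i)) :
    MeasurableSet {ω | isRet (fun k => ξ k ω) μ h w m} := by
  have h1 := measurable_deCusum μ h w m fun i hi => hξ i (by omega)
  have h2 := measurable_deCusum μ h w (m + 1) hξ
  exact (measurableSet_lt h1 measurable_const).inter (measurableSet_le measurable_const h2)

lemma measurableSet_stay : MeasurableSet {x : ℕ → ℝ | ∀ n, 1 ≤ n → 0 ≤ psum x n} := by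
  have : {x : ℕ → ℝ | ∀ n, 1 ≤ n → 0 ≤ psum x n} = ⋂ n, ⋂ (_ : 1 ≤ n), {x | 0 ≤ psum x n} := by
    ext x; simp
  rw [this]
  refine MeasurableSet.iInter fun n => MeasurableSet.iInter fun _ => ?_
  have : Measurable (fun x : ℕ → ℝ => psum x n) := by
    unfold psum; fun_prop
  exact measurableSet_le measurable_const this

lemma sum_ret_le {ξ : ℕ → Ω → ℝ} (hmeas : ∀ n, Measurable (ξ n))
    (hindep : iIndepFun ξ P) (hid : ∀ n, IdentDistrib (ξ n) (ξ 0) P P) {μ h : ℝ} (w : ℝ)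
    (hh : 0 ≤ h) :
    (∑' m, P {ω | isRet (fun k => ξ k ω) μ h w m}) *
      P {ω | ∀ n : ℕ, 1 ≤ n → 0 ≤ psum (fun k => ξ k ω) n} ≤ 1 := by
  set R : ℕ → Set Ω := fun m => {ω | isRet (fun k => ξ k ω) μ h w m} with hR
  set H : ℕ → Set Ω := fun m => {ω | ∀ n : ℕ, 1 ≤ n → 0 ≤ psum (fun k => ξ (k + m) ω) n} with hH
  have hq : ∀ m, P (H m) = P {ω | ∀ n : ℕ, 1 ≤ n → 0 ≤ psum (fun k => ξ k ω) n} := fun m =>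
    (ident_shift hmeas hindep hid m).measure_mem_eq measurableSet_stay
  have hmul : ∀ m, P (R m ∩ H (m + 1)) =
      P (R m) * P {ω | ∀ n : ℕ, 1 ≤ n → 0 ≤ psum (fun k => ξ k ω) n} := by
    intro m
    rw [(Indep_iff _ _ _).1 (indep_past_fut hmeas hindep (m + 1)) (R m) (H (m + 1))
      (@measurableSet_isRet _ (sigmaPast ξ (m + 1)) _ μ h w m fun i hi => measurable_past ξ hi)
      (measurable_fut_pi ξ (m + 1) measurableSet_stay), hq]
  rw [← ENNReal.tsum_mul_right]
  rw [← tsum_congr hmul]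
  have hmR : ∀ m, MeasurableSet (R m) := fun m => measurableSet_isRet μ h w m fun i _ => hmeas i
  have hmH : ∀ m, MeasurableSet (H m) := fun m =>
    (measurable_pi_lambda (fun ω k => ξ (k + m) ω) fun _ => hmeas _) measurableSet_stay
  have key : ∀ a b, a < b → ∀ ω, ω ∈ R a ∩ H (a + 1) → ω ∉ R b := by
    rintro a b hab ω ⟨h1, h2⟩ h3
    have h0 : deCusum (fun k => ξ k ω) μ h w (a + 1) = 0 := by
      refine le_antisymm ?_ h1.2
      rw [deCusum_neg h1.1]
      exact min_le_right _ _
    have h4 := deCusum_after hh h0 h2 (b - (a + 1))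
    rw [show a + 1 + (b - (a + 1)) = b by omega] at h4
    have h5 : 0 ≤ psum (fun k => ξ (k + (a + 1)) ω) (b - (a + 1)) := by
      rcases Nat.eq_zero_or_pos (b - (a + 1)) with hn | hn
      · simp [hn, psum]
      · exact h2 _ hn
    have h6 := h3.1
    rw [h4] at h6
    exact absurd h6 (not_lt.2 h5)
  rw [← measure_iUnion]
  · exact prob_le_one
  · intro a b hab
    rw [Function.onFun, Set.disjoint_left]
    intro ω ha hb
    rcases lt_or_gt_of_ne hab with hlt | hlt
    · exact key a b hlt ω ha hb.1
    · exact key b a hlt ω hb ha.1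
  · exact fun m => (hmR m).inter (hmH _)

lemma lintegral_lastTime_lt {ξ : ℕ → Ω → ℝ} (hmeas : ∀ n, Measurable (ξ n))
    (hindep : iIndepFun ξ P) (hid : ∀ n, IdentDistrib (ξ n) (ξ 0) P P)
    (hL : MemLp (ξ 0) 2 P) (hmean : 0 < ∫ ω, ξ 0 ω ∂P) :
    ∫⁻ ω, (lastTime (fun n => psum (fun k => ξ k ω) n ≤ 0) : ℝ≥0∞) ∂P < ⊤ := by
  set δ := (∫ ω, ξ 0 ω ∂P) / 2 with hδ
  have hδ0 : 0 < δ := by positivity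
  set Y : ℕ → Ω → ℝ := fun n ω => δ - ξ n ω with hY
  have hg : Measurable (fun x : ℝ => δ - x) := by fun_prop
  have hmY : ∀ n, Measurable (Y n) := fun n => hg.comp (hmeas n)
  have hiY : iIndepFun Y P := hindep.comp (fun _ x => δ - x) (fun _ => hg)
  have hidY : ∀ n, IdentDistrib (Y n) (Y 0) P P := fun n => (hid n).comp hg
  have hLY : MemLp (Y 0) 2 P := (memLp_const δ).sub hL
  have hneg : ∫ ω, Y 0 ω ∂P < 0 := by
    simp only [hY]
    rw [integral_sub (integrable_const δ) (hL.integrable (by norm_num))]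
    simp
    linarith
  have hfin := runMax_lintegral_lt hmY hiY hidY hLY hneg
  have hle : ∀ ω, ENNReal.ofReal δ * (lastTime (fun n => psum (fun k => ξ k ω) n ≤ 0) : ℝ≥0∞) ≤
      ⨆ n, ENNReal.ofReal (runMax n (fun k => Y k ω)) := by
    intro ω
    rw [mul_comm, ← ENNReal.le_div_iff_mul_le (Or.inl (by simpa using hδ0))
      (Or.inl ENNReal.ofReal_ne_top)]
    refine lastTime_le fun n _ hn => ?_
    rw [ENNReal.le_div_iff_mul_le (Or.inl (by simpa using hδ0))
      (Or.inl ENNReal.ofReal_ne_top)]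
    refine le_iSup_of_le n ?_
    rw [← ENNReal.ofReal_natCast, ← ENNReal.ofReal_mul (by positivity)]
    refine ENNReal.ofReal_le_ofReal (le_trans ?_ (psum_le_runMax n _))
    have : psum (fun k => Y k ω) n = n * δ - psum (fun k => ξ k ω) n := by
      simp [psum, hY]
    linarith
  have h1 := lt_of_le_of_lt (lintegral_mono (μ := P) hle) hfin
  rw [lintegral_const_mul' _ _ ENNReal.ofReal_ne_top] at h1
  by_contra hc
  rw [not_lt, top_le_iff] at hc
  rw [hc, ENNReal.mul_top (by simpa using hδ0)] at h1
  exact lt_irrefl _ h1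

end Iid

/-- Lemma 1: for i.i.d. increments with positive mean and finite second moment, the last exit
time `ν_W = sup{n ≥ 1 : W_n ≤ w}` of the DE-CuSum statistic started at `w ≥ 0` satisfies
`E[ν_W] ≤ E[ν_R] + ⌈h/μ⌉/q < ∞`, where `ν_R = sup{n ≥ 1 : S_n ≤ 0}` and
`q = ℙ(S_n ≥ 0 for all n ≥ 1)`; in particular `ν_W` is finite almost surely, and its
expectation is bounded by a finite constant independent of any detection threshold. -/
theorem deCusum_lastExit_bound {Ω : Type*} [MeasurableSpace Ω] (P : Measure Ω)
    [IsProbabilityMeasure P] (ξ : ℕ → Ω → ℝ) (hmeas : ∀ n, Measurable (ξ n))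
    (hindep : iIndepFun ξ P)
    (hid : ∀ n, IdentDistrib (ξ n) (ξ 0) P P)
    (hint : Integrable (ξ 0) P) (hmean : 0 < ∫ ω, ξ 0 ω ∂P)
    (hvar : Integrable (fun ω => (ξ 0 ω) ^ 2) P)
    (μ h w : ℝ) (hμ : 0 < μ) (hh : 0 ≤ h) (hw : 0 ≤ w) :
    ∫⁻ ω, (lastTime (fun n => deCusum (fun k => ξ k ω) μ h w n ≤ w) : ℝ≥0∞) ∂P ≤
        (∫⁻ ω, (lastTime (fun n => psum (fun k => ξ k ω) n ≤ 0) : ℝ≥0∞) ∂P) +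
          (⌈h / μ⌉₊ : ℝ≥0∞) / P {ω | ∀ n : ℕ, 1 ≤ n → 0 ≤ psum (fun k => ξ k ω) n} ∧
      (∫⁻ ω, (lastTime (fun n => psum (fun k => ξ k ω) n ≤ 0) : ℝ≥0∞) ∂P) +
          (⌈h / μ⌉₊ : ℝ≥0∞) / P {ω | ∀ n : ℕ, 1 ≤ n → 0 ≤ psum (fun k => ξ k ω) n} < ⊤ ∧
      ∀ᵐ ω ∂P, lastTime (fun n => deCusum (fun k => ξ k ω) μ h w n ≤ w) < ⊤ := by
  have hL : MemLp (ξ 0) 2 P := (memLp_two_iff_integrable_sq hint.1).2 hvar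
  have hq := stay_nonneg_pos hmeas hindep hid hL hmean
  have hR := lintegral_lastTime_lt hmeas hindep hid hL hmean
  have hB1 : ∫⁻ ω, (lastTime (fun n => deCusum (fun k => ξ k ω) μ h w n ≤ w) : ℝ≥0∞) ∂P ≤
        (∫⁻ ω, (lastTime (fun n => psum (fun k => ξ k ω) n ≤ 0) : ℝ≥0∞) ∂P) +
          (⌈h / μ⌉₊ : ℝ≥0∞) / P {ω | ∀ n : ℕ, 1 ≤ n → 0 ≤ psum (fun k => ξ k ω) n} := by
    classical
    have hmI : ∀ m, Measurable
        (fun ω => if isRet (fun k => ξ k ω) μ h w m then (1 : ℝ≥0∞) else 0) := fun m =>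
      Measurable.ite (measurableSet_isRet μ h w m fun i _ => hmeas i)
        measurable_const measurable_const
    have hmT : Measurable
        (fun ω => ∑' m, if isRet (fun k => ξ k ω) μ h w m then (1 : ℝ≥0∞) else 0) :=
      Measurable.ennreal_tsum hmI
    refine (lintegral_mono fun ω => lastTime_deCusum_le hμ hh hw).trans ?_
    rw [lintegral_add_right _ (hmT.const_mul _), lintegral_const_mul _ hmT,
      lintegral_usedSeq hmeas hindep hid h w hμ, lintegral_tsum fun m => (hmI m).aemeasurable]
    have hint1 : ∀ m, ∫⁻ ω, (if isRet (fun k => ξ k ω) μ h w m then (1 : ℝ≥0∞) else 0) ∂P =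
        P {ω | isRet (fun k => ξ k ω) μ h w m} := by
      intro m
      rw [← lintegral_indicator_one (measurableSet_isRet μ h w m fun i _ => hmeas i)]
      rfl
    simp_rw [hint1]
    refine add_le_add le_rfl ?_
    rw [div_eq_mul_inv]
    refine mul_le_mul_right ?_ _
    rw [← one_div, ENNReal.le_div_iff_mul_le (Or.inl hq) (Or.inl (measure_ne_top _ _))]
    exact sum_ret_le hmeas hindep hid w hh
  have hB2 : (∫⁻ ω, (lastTime (fun n => psum (fun k => ξ k ω) n ≤ 0) : ℝ≥0∞) ∂P) +
          (⌈h / μ⌉₊ : ℝ≥0∞) / P {ω | ∀ n : ℕ, 1 ≤ n → 0 ≤ psum (fun k => ξ k ω) n} < ⊤ :=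
    ENNReal.add_lt_top.2 ⟨hR, ENNReal.div_lt_top (ENNReal.natCast_ne_top _) hq⟩
  refine ⟨hB1, hB2, ?_⟩
  have hmW : Measurable
      (fun ω => (lastTime (fun n => deCusum (fun k => ξ k ω) μ h w n ≤ w) : ℝ≥0∞)) := by
    classical
    simp_rw [lastTime_eq]
    refine Measurable.iSup fun n => Measurable.ite ?_ measurable_const measurable_const
    exact (MeasurableSet.const _).inter
      (measurableSet_le (measurable_deCusum μ h w n fun i _ => hmeas i) measurable_const)
  filter_upwards [ae_lt_top hmW (lt_of_le_of_lt hB1 hB2).ne] with ω hω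
  exact ENat.toENNReal_lt_top.1 hω
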